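/- Power-sum Hamiltonians: under these hypotheses, define elements P_k ∈ R by the Newton recursion P_1 := C_1 and, for k ≥ 2, P_k := Σ_{i=1}^{k-1} (−1)^{i-1}·C_i·P_{k-i} + (−1)^{k-1}·k·C_k, with the convention C_j := 0 for j > r+1 (so that exp(−Σ_{k≥1} (z^k/k)·P_k) = Σ_{m=0}^{r+1} (−z)^m·C_m formally). Then P_k·M_n − M_n·P_k = (1−q^k)·M_{n+k} for all k ≥ 1 and n ∈ ℤ, where M_n := M_{1,n}. -/

import Mathlib

/-- ξ_{α,n} := M_{α,n} · M_{α,n+1}⁻¹ -/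
def xiv {R : Type*} [Ring R] (M Mi : ℕ → ℤ → R) (α : ℕ) (n : ℤ) : R :=
  M α n * Mi α (n + 1)

/-- ξ_{α,n}⁻¹ = M_{α,n+1} · M_{α,n}⁻¹ -/
def xivInv {R : Type*} [Ring R] (M Mi : ℕ → ℤ → R) (α : ℕ) (n : ℤ) : R :=
  M α (n + 1) * Mi α n

/-- x_{α,n} := ξ_{α,n}⁻¹ · ξ_{α-1,n} -/
def xv {R : Type*} [Ring R] (M Mi : ℕ → ℤ → R) (α : ℕ) (n : ℤ) : R :=
  xivInv M Mi α n * xiv M Mi (α - 1) n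

/-- The Miura coefficient C_{m,n} = Σ_{r+1 ≥ α₁ > ⋯ > α_m ≥ 1}
∏_{j=1}^m x_{α_j, n+(r+1-α_j)-(j-1)} (ordered product, j increasing left to right). -/
def CMiura {R : Type*} [Ring R] (M Mi : ℕ → ℤ → R) (r : ℕ) (m : ℕ) (n : ℤ) : R :=
  ∑ S ∈ Finset.powersetCard m (Finset.Icc 1 (r + 1)),
    (((S.sort (· ≤ ·)).reverse.zipIdx.map Prod.swap).map
      (fun ji => xv M Mi ji.2 (n + ((r : ℤ) + 1 - (ji.2 : ℤ)) - (ji.1 : ℤ)))).prod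

/-- The power sums P_k defined by the Newton recursion:
P_1 = C_1, P_k = Σ_{i=1}^{k-1} (-1)^{i-1} C_i P_{k-i} + (-1)^{k-1} k C_k. -/
def newtonP {R : Type*} [Ring R] (C : ℕ → R) : ℕ → R
  | 0 => 0
  | k + 1 =>
      (∑ i ∈ (Finset.Icc 1 k).attach,
        (-1 : R) ^ ((i : ℕ) - 1) * C i * newtonP C (k + 1 - (i : ℕ)))
        + (-1 : R) ^ k * ((k + 1 : ℕ) : R) * C (k + 1)
  decreasing_by
    have h := i.2
    simp only [Finset.mem_Icc] at h
    omega

/-!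
Let `F = ∑ₘ (-X)ᵐ Cₘ` and `p = ∑ₖ Pₖ Xᵏ` be power series with coefficients in `R`, and write
`θ = X d/dX`. Newton's recursion says `F p = -θ F`, that is `p = -F⁻¹ θ F`.

Two properties of `F` come from the M-system. It does not depend on the time `n` at which the Miura
operator is expanded: the series `B_α` of the first `α` factors evolves by
`B_{α+1,n+1} = B_{α+1,n} - X v_{α,n} B_{α,n}`, and `v_{r,n}` is a multiple of `M_{r+2,n+1} = 0`.
Moreover `F (Mₙ - q X Mₙ₊₁) = (Mₙ - X Mₙ₊₁) F`, by induction on the number of factors, all of which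
`q`-commute with `Mₙ` and `Mₙ₊₁`.

Put `Lₙ = F⁻¹ Mₙ F`. The exchange relation becomes `Lₙ - X Lₙ₊₁ = Mₙ - q X Mₙ₊₁`, so `Lₙ - q Mₙ` has
coefficients `(1 - q) Mₙ₊ₖ`; differentiating the definition of `Lₙ` gives `[p, Lₙ] = θ Lₙ`.
Bracketing the former with `p` yields `[p, Mₙ] = X (q [p, Mₙ₊₁] + Lₙ₊₁ - q Mₙ₊₁)`, which determines
the coefficients of `[p, Mₙ]` recursively.
-/

open PowerSeries

section PowerSeries

attribute [local instance] LieRing.ofAssociativeRing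

variable {R : Type*} [Ring R]

/-- The Euler derivation `X d/dX`, defined coefficientwise because `PowerSeries.derivative` asks for
commutative coefficients. -/
noncomputable def eulerDeriv : R⟦X⟧ →+ R⟦X⟧ where
  toFun f := mk fun k => k • coeff k f
  map_zero' := by ext; simp
  map_add' f g := by ext; simp

theorem coeff_eulerDeriv (f : R⟦X⟧) (k : ℕ) : coeff k (eulerDeriv f) = k • coeff k f :=
  coeff_mk k fun k => k • coeff k f

theorem eulerDeriv_C (a : R) : eulerDeriv (C a) = 0 := by
  ext k
  cases k <;> simp [coeff_eulerDeriv]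

theorem eulerDeriv_X : eulerDeriv (X : R⟦X⟧) = X := by
  ext k
  rw [coeff_eulerDeriv, coeff_X]
  split_ifs with hk <;> simp [hk]

theorem eulerDeriv_mul (f g : R⟦X⟧) :
    eulerDeriv (f * g) = eulerDeriv f * g + f * eulerDeriv g := by
  ext k
  simp only [coeff_eulerDeriv, coeff_mul, map_add, ← Finset.sum_add_distrib, Finset.smul_sum]
  refine Finset.sum_congr rfl fun ij hij => ?_
  rw [← Finset.HasAntidiagonal.mem_antidiagonal.mp hij, add_smul, smul_mul_assoc, mul_smul_comm]

theorem lie_eq_eulerDeriv_of_semiconjBy {F p L m : R⟦X⟧} (hF : IsUnit F)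
    (hp : F * p = -eulerDeriv F) (hm : eulerDeriv m = 0) (hL : SemiconjBy F L m) :
    ⁅p, L⁆ = eulerDeriv L := by
  have leibniz : eulerDeriv F * L + F * eulerDeriv L = m * eulerDeriv F := by
    rw [← eulerDeriv_mul, hL.eq, eulerDeriv_mul, hm, zero_mul, zero_add]
  refine hF.mul_left_cancel ?_
  calc F * (p * L - L * p) = F * p * L - F * L * p := by noncomm_ring
    _ = -eulerDeriv F * L + m * eulerDeriv F := by
      rw [hL.eq, mul_assoc m, hp, mul_neg, sub_neg_eq_add]
    _ = F * eulerDeriv L := by rw [← leibniz]; noncomm_ring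

theorem coeff_of_eq_C_add_X_mul_shift {a : ℤ → R} {G : ℤ → R⟦X⟧}
    (hG : ∀ n, G n = C (a n) + X * G (n + 1)) (k : ℕ) (n : ℤ) : coeff k (G n) = a (n + k) := by
  induction k generalizing n with
  | zero => rw [hG]; simp
  | succ k ih =>
    rw [hG, map_add, coeff_succ_C, zero_add, coeff_succ_X_mul, ih]
    congr 1; push_cast; ring

theorem coeff_of_eq_X_mul_shift {q : R} {M : ℤ → R} {D G : ℤ → R⟦X⟧}
    (hG : ∀ k n, coeff k (G n) = (1 - q) * M (n + (k : ℕ)))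
    (hD : ∀ n, D n = X * (C q * D (n + 1) + G (n + 1))) (k : ℕ) (n : ℤ) :
    coeff k (D n) = (1 - q ^ k) * M (n + k) := by
  induction k generalizing n with
  | zero => rw [hD]; simp
  | succ k ih =>
    rw [hD, coeff_succ_X_mul, map_add, coeff_C_mul, ih, hG,
      show n + 1 + (k : ℤ) = n + (k + 1 : ℕ) by push_cast; ring, pow_succ']
    noncomm_ring

theorem lie_mul_of_commute {A : Type*} [Ring A] {p c : A} (h : Commute p c) (f : A) :
    ⁅p, c * f⁆ = c * ⁅p, f⁆ := by
  simp only [Ring.lie_def, mul_sub, ← mul_assoc, h.eq]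

theorem commute_C_of_forall_commute {q : R} (hq : ∀ a, Commute q a) (f : R⟦X⟧) :
    Commute f (C q) := by
  ext k
  rw [coeff_mul_C, coeff_C_mul, (hq _).eq]

theorem lie_coeff_of_sub_X_mul_shift {q : R} {M : ℤ → R} {p : R⟦X⟧} {L : ℤ → R⟦X⟧}
    (hq : ∀ a, Commute q a) (hL : ∀ n, L n - X * L (n + 1) = C (M n) - X * C (q * M (n + 1)))
    (hpL : ∀ n, ⁅p, L n⁆ = eulerDeriv (L n)) (k : ℕ) (n : ℤ) :
    ⁅coeff k p, M n⁆ = (1 - q ^ k) * M (n + k) := by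
  have coeff_L_sub (k : ℕ) (n : ℤ) : coeff k (L n - C (q * M n)) = (1 - q) * M (n + k) := by
    refine coeff_of_eq_C_add_X_mul_shift (a := fun n => (1 - q) * M n)
      (G := fun n => L n - C (q * M n)) (fun n => ?_) k n
    rw [sub_eq_iff_eq_add.mp (hL n), sub_mul, one_mul, map_sub, mul_sub]
    abel
  have lie_C_sub (n : ℤ) : ⁅p, C (M n)⁆ - X * (C q * ⁅p, C (M (n + 1))⁆) =
      X * (L (n + 1) - C (q * M (n + 1))) := by
    calc ⁅p, C (M n)⁆ - X * (C q * ⁅p, C (M (n + 1))⁆)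
        = ⁅p, C (M n) - X * C (q * M (n + 1))⁆ := by
          rw [lie_sub, lie_mul_of_commute (commute_X p), map_mul,
            lie_mul_of_commute (commute_C_of_forall_commute hq p)]
      _ = eulerDeriv (L n) - X * eulerDeriv (L (n + 1)) := by
          rw [← hL, lie_sub, lie_mul_of_commute (commute_X p), hpL, hpL]
      _ = eulerDeriv (L n - X * L (n + 1)) + X * L (n + 1) := by
          rw [map_sub, eulerDeriv_mul, eulerDeriv_X]; abel
      _ = X * (L (n + 1) - C (q * M (n + 1))) := by
          rw [hL, map_sub, eulerDeriv_mul, eulerDeriv_X, eulerDeriv_C, eulerDeriv_C, mul_sub]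
          noncomm_ring
  have lie_C_eq (n : ℤ) :
      ⁅p, C (M n)⁆ = X * (C q * ⁅p, C (M (n + 1))⁆ + (L (n + 1) - C (q * M (n + 1)))) := by
    rw [mul_add, ← lie_C_sub, add_sub_cancel]
  simpa [Ring.lie_def] using coeff_of_eq_X_mul_shift coeff_L_sub lie_C_eq k n

theorem lie_coeff_of_semiconjBy {q : R} {M : ℤ → R} {F p : R⟦X⟧} (hq : ∀ a, Commute q a)
    (hF : IsUnit F) (hp : F * p = -eulerDeriv F)
    (hFM : ∀ n, SemiconjBy F (C (M n) - X * C (q * M (n + 1))) (C (M n) - X * C (M (n + 1))))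
    (k : ℕ) (n : ℤ) : ⁅coeff k p, M n⁆ = (1 - q ^ k) * M (n + k) := by
  obtain ⟨u, rfl⟩ := hF
  let L (n : ℤ) : R⟦X⟧ := ↑u⁻¹ * C (M n) * u
  have semiconj_L (n : ℤ) : SemiconjBy (u : R⟦X⟧) (L n) (C (M n)) := by
    simp [SemiconjBy, L, mul_assoc]
  have semiconj_X : SemiconjBy (u : R⟦X⟧) X X := commute_X _
  refine lie_coeff_of_sub_X_mul_shift hq (L := L) (fun n => u.isUnit.mul_left_cancel ?_)
    (fun n => lie_eq_eulerDeriv_of_semiconjBy u.isUnit hp (eulerDeriv_C _) (semiconj_L n)) k n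
  rw [(hFM n).eq]
  exact ((semiconj_L n).sub_right (semiconj_X.mul_right (semiconj_L (n + 1)))).eq

theorem one_sub_X_mul_C_semiconjBy {q x a b : R} (hxa : x * a = b) (hax : a * x = q * b) :
    SemiconjBy (1 - X * C x) (C a - X * C (q * b)) (C a - X * C b) := by
  have hbx : b * x = x * (q * b) := by rw [← hax, ← mul_assoc, hxa]
  have C_mul_X (c : R) (f : R⟦X⟧) : C c * (X * f) = X * (C c * f) := by
    rw [← mul_assoc, (commute_X _).eq, mul_assoc]
  simp only [SemiconjBy, sub_mul, mul_sub, one_mul, mul_one, mul_assoc, C_mul_X, ← map_mul, hxa,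
    hax, hbx]

theorem C_semiconjBy_sub_X_mul {c a a' b b' : R} (ha : SemiconjBy c a a')
    (hb : SemiconjBy c b b') : SemiconjBy (C c) (C a - X * C b) (C a' - X * C b') :=
  (ha.map C).sub_right (SemiconjBy.mul_right (commute_X (C c)) (hb.map C))

end PowerSeries

section Newton

variable {R : Type*} [Ring R]

theorem newtonP_succ (C : ℕ → R) (k : ℕ) :
    newtonP C (k + 1) = ∑ i ∈ Finset.range k, (-1) ^ i * C (i + 1) * newtonP C (k - i) +
      (-1) ^ k * ((k + 1 : ℕ) : R) * C (k + 1) := by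
  rw [newtonP, Finset.sum_attach (Finset.Icc 1 k)
    (fun i => (-1 : R) ^ (i - 1) * C i * newtonP C (k + 1 - i)),
    ← Finset.Ico_add_one_right_eq_Icc, Finset.sum_Ico_eq_sum_range]
  simp [add_comm 1]

theorem mk_mul_mk_newtonP (C : ℕ → R) (hC : C 0 = 1) :
    (mk fun m => (-1) ^ m * C m) * mk (newtonP C) = -eulerDeriv (mk fun m => (-1) ^ m * C m) := by
  ext k
  rw [coeff_mul, map_neg, coeff_eulerDeriv, coeff_mk]
  simp only [coeff_mk]
  cases k with
  | zero => simp [newtonP]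
  | succ k =>
    rw [Finset.Nat.sum_antidiagonal_eq_sum_range_succ
      (fun i j => (-1) ^ i * C i * newtonP C j), Finset.sum_range_succ, Finset.sum_range_succ']
    simp only [Nat.add_sub_add_right, tsub_self, tsub_zero, hC, newtonP_succ C k, newtonP.eq_1,
      pow_succ, pow_zero]
    rw [← (Nat.cast_commute (k + 1) ((-1 : R) ^ k)).eq]
    simp [mul_assoc]

end Newton

section Miura

variable {R : Type*} [Ring R]

/-- The ordered product `∏ⱼ x_{αⱼ, n - αⱼ - j}` over the entries of `l = [α₀, α₁, …]`, the shape of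
the summands of `CMiura`. -/
def shiftedProd (x : ℕ → ℤ → R) (n : ℤ) (l : List ℕ) : R :=
  ((l.zipIdx.map Prod.swap).map fun ji => x ji.2 (n - ji.2 - ji.1)).prod

theorem shiftedProd_cons (x : ℕ → ℤ → R) (n : ℤ) (a : ℕ) (l : List ℕ) :
    shiftedProd x n (a :: l) = x a (n - a) * shiftedProd x (n - 1) l := by
  rw [shiftedProd, shiftedProd, List.zipIdx_cons']
  simp [Function.comp_def, sub_sub, add_comm, add_left_comm]

/-- The generating series `∑ₘ (-X)ᵐ C_{m,n}` of the Miura coefficients of the first `N` factors: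
the expansion of `(D - x_{N,n}) ⋯ (D - x_{1,n})` by peeling off the leftmost factor. -/
noncomputable def miuraSeries (x : ℕ → ℤ → R) : ℕ → ℤ → R⟦X⟧
  | 0, _ => 1
  | N + 1, n => miuraSeries x N (n + 1) - X * (C (x (N + 1) n) * miuraSeries x N n)

theorem miuraSeries_succ (x : ℕ → ℤ → R) (N : ℕ) (n : ℤ) : miuraSeries x (N + 1) n =
    miuraSeries x N (n + 1) - X * (C (x (N + 1) n) * miuraSeries x N n) := rfl

theorem reverse_sort_le {ι : Type*} [LinearOrder ι] (S : Finset ι) :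
    (S.sort (· ≤ ·)).reverse = S.sort (· ≥ ·) := by
  refine List.Perm.eq_of_pairwise' (r := (· ≥ ·)) ?_ (S.pairwise_sort _) ?_
  · exact List.pairwise_reverse.mpr (S.pairwise_sort _)
  · exact (List.reverse_perm _).trans ((S.sort_perm_toList _).trans (S.sort_perm_toList _).symm)

theorem reverse_sort_insert_of_lt {ι : Type*} [LinearOrder ι] {S : Finset ι} {a : ι}
    (ha : ∀ b ∈ S, b < a) :
    ((insert a S).sort (· ≤ ·)).reverse = a :: (S.sort (· ≤ ·)).reverse := by
  rw [reverse_sort_le, reverse_sort_le,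
    Finset.sort_insert _ (fun b hb => (ha b hb).le) fun h => (ha a h).false]

theorem miuraSeries_eq_sum_powerset (x : ℕ → ℤ → R) (N : ℕ) (n : ℤ) :
    miuraSeries x N n = ∑ S ∈ (Finset.Icc 1 N).powerset,
      monomial S.card ((-1) ^ S.card * shiftedProd x (n + N) (S.sort (· ≤ ·)).reverse) := by
  induction N generalizing n with
  | zero => simp [miuraSeries, shiftedProd]
  | succ N ih =>
    have not_mem : N + 1 ∉ Finset.Icc 1 N := by simp
    have time_shift : n + 1 + (N : ℤ) = n + (N + 1 : ℕ) := by push_cast; ring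
    rw [miuraSeries_succ, ih, ih, ← Finset.insert_Icc_right_eq_Icc_add_one (Nat.le_add_left 1 N),
      Finset.sum_powerset_insert not_mem, time_shift, sub_eq_add_neg, Finset.mul_sum,
      Finset.mul_sum, ← Finset.sum_neg_distrib]
    congr 1
    refine Finset.sum_congr rfl fun S hS => ?_
    have hlt : ∀ b ∈ S, b < N + 1 := fun b hb =>
      Nat.lt_succ_of_le (Finset.mem_Icc.mp (Finset.mem_powerset.mp hS hb)).2
    rw [reverse_sort_insert_of_lt hlt, shiftedProd_cons,
      Finset.card_insert_of_notMem fun h => (hlt _ h).false, ← monomial_zero_eq_C_apply, X_eq,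
      monomial_mul_monomial, monomial_mul_monomial, ← map_neg]
    rw [show 1 + (0 + S.card) = S.card + 1 by omega, add_sub_cancel_right, ← time_shift,
      add_right_comm, add_sub_cancel_right, one_mul, ← mul_assoc,
      ((Commute.neg_one_right _).pow_right S.card).eq, pow_succ]
    simp only [mul_neg_one, neg_mul, mul_assoc]

theorem coeff_miuraSeries_xv (M Mi : ℕ → ℤ → R) (r m : ℕ) (n : ℤ) :
    coeff m (miuraSeries (xv M Mi) (r + 1) n) = (-1) ^ m * CMiura M Mi r m n := by
  simp only [miuraSeries_eq_sum_powerset, map_sum, coeff_monomial, eq_comm (a := m),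
    ← Finset.sum_filter, ← Finset.powersetCard_eq_filter, CMiura, Finset.mul_sum]
  refine Finset.sum_congr rfl fun S hS => ?_
  rw [(Finset.mem_powersetCard.mp hS).2, shiftedProd]
  simp only [Nat.cast_succ, add_sub_assoc]

theorem constantCoeff_miuraSeries (x : ℕ → ℤ → R) (N : ℕ) (n : ℤ) :
    constantCoeff (miuraSeries x N n) = 1 := by
  induction N generalizing n with
  | zero => simp [miuraSeries]
  | succ N ih => simp [miuraSeries, ih]

theorem CMiura_zero (M Mi : ℕ → ℤ → R) (r : ℕ) (n : ℤ) : CMiura M Mi r 0 n = 1 := by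
  simp [CMiura]

theorem CMiura_of_lt (M Mi : ℕ → ℤ → R) {r m : ℕ} (h : r + 1 < m) (n : ℤ) :
    CMiura M Mi r m n = 0 := by
  rw [CMiura, Finset.powersetCard_eq_empty.mpr (by simpa using h), Finset.sum_empty]

end Miura

section TimeShift

variable {R : Type*} [Ring R] {x v : ℕ → ℤ → R} {N : ℕ}

theorem miuraSeries_succ_add_one (v_zero : ∀ n, v 0 n = x 1 (n + 1) - x 1 n)
    (v_succ : ∀ α < N, ∀ n, v (α + 1) n = v α (n + 1) + x (α + 2) (n + 1) - x (α + 2) n)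
    (x_mul_v : ∀ α < N, ∀ n, x (α + 2) (n + 1) * v α n = v α (n + 1) * x (α + 1) n)
    {α : ℕ} (hα : α ≤ N) (n : ℤ) : miuraSeries x (α + 1) (n + 1) =
      miuraSeries x (α + 1) n - X * (C (v α n) * miuraSeries x α n) := by
  induction α generalizing n with
  | zero =>
    simp only [miuraSeries, v_zero, map_sub]
    noncomm_ring
  | succ α ih =>
    replace ih := ih (Nat.le_of_succ_le hα)
    have cancel : C (v α (n + 1)) * (miuraSeries x α (n + 1) - miuraSeries x (α + 1) n) =
        C (x (α + 2) (n + 1)) * (miuraSeries x (α + 1) n - miuraSeries x (α + 1) (n + 1)) := by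
      rw [ih, sub_sub_cancel, miuraSeries_succ, sub_sub_cancel]
      simp only [← mul_assoc, (commute_X _).eq]
      simp only [mul_assoc X, ← map_mul, x_mul_v α hα]
    calc miuraSeries x (α + 2) (n + 1)
        = miuraSeries x (α + 1) (n + 1) - X * (C (v α (n + 1)) * miuraSeries x α (n + 1) +
            C (x (α + 2) (n + 1)) * miuraSeries x (α + 1) (n + 1)) := by
          rw [miuraSeries_succ, ih (n + 1)]; noncomm_ring
      _ = miuraSeries x (α + 1) (n + 1) - X * ((C (v α (n + 1)) + C (x (α + 2) (n + 1))) *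
            miuraSeries x (α + 1) n) := by
          congr 2
          rw [← sub_eq_zero] at cancel ⊢
          rw [← cancel]; noncomm_ring
      _ = miuraSeries x (α + 2) n - X * (C (v (α + 1) n) * miuraSeries x (α + 1) n) := by
          rw [miuraSeries_succ x (α + 1), v_succ α hα, map_sub, map_add]; noncomm_ring

theorem miuraSeries_semiconjBy {n : ℤ} {W W' : R⟦X⟧}
    (time_shift : ∀ α < N, miuraSeries x (α + 1) (n + 1) =
      miuraSeries x (α + 1) n - X * (C (v α n) * miuraSeries x α n))
    (one : SemiconjBy (miuraSeries x 1 n) W' W) (v_zero : 0 < N → SemiconjBy (C (v 0 n)) W' W)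
    (commute_v : ∀ α, α + 1 < N → Commute (C (v (α + 1) n)) W)
    (commute_x : ∀ α < N, Commute (C (x (α + 2) n)) W) {α : ℕ} (hα : α ≤ N) :
    SemiconjBy (miuraSeries x (α + 1) n) W' W := by
  have semiconj_X : SemiconjBy X W W := (commute_X W).symm
  have step {α : ℕ} (hα : α < N) (succ : SemiconjBy (miuraSeries x (α + 1) n) W' W)
      (v_mul : SemiconjBy (C (v α n) * miuraSeries x α n) W' W) :
      SemiconjBy (miuraSeries x (α + 2) n) W' W := by
    rw [miuraSeries_succ, time_shift α hα]
    exact (succ.sub_left (semiconj_X.mul_left v_mul)).sub_left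
      (semiconj_X.mul_left (SemiconjBy.mul_left (commute_x α hα) succ))
  induction α using Nat.twoStepInduction with
  | zero => exact one
  | one => exact step hα one (by simpa [miuraSeries] using v_zero hα)
  | more α ih ih_succ =>
    exact step hα (ih_succ (by omega)) (SemiconjBy.mul_left (commute_v α hα) (ih (by omega)))

end TimeShift

section QCommute

variable {R : Type*} [Ring R]

/-- The elements `a` and `b` `q`-commute with weight `k`: `a * b = q ^ k * (b * a)`. -/
def QCommute (q : Rˣ) (k : ℤ) (a b : R) : Prop :=
  a * b = (q ^ k : Rˣ) * (b * a)

namespace QCommute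

variable {q : Rˣ} {k l : ℤ} {a b c : R}

theorem commute (h : QCommute q 0 a b) : Commute a b := by
  simpa [QCommute, commute_iff_eq] using h

theorem neg_right (h : QCommute q k a b) : QCommute q k a (-b) := by
  rw [QCommute, mul_neg, neg_mul, mul_neg, h]

theorem symm (h : QCommute q k a b) : QCommute q (-k) b a := by
  rw [QCommute, h, ← mul_assoc, ← Units.val_mul, ← zpow_add, neg_add_cancel, zpow_zero,
    Units.val_one, one_mul]

theorem mul_right (hq : ∀ x, Commute (q : R) x) (hb : QCommute q k a b) (hc : QCommute q l a c) :
    QCommute q (k + l) a (b * c) := by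
  calc a * (b * c) = (q ^ k : Rˣ) * b * (a * c) := by rw [← mul_assoc, hb]; noncomm_ring
    _ = (q ^ k : Rˣ) * (b * (q ^ l : Rˣ)) * (c * a) := by rw [hc]; noncomm_ring
    _ = (q ^ (k + l) : Rˣ) * (b * c * a) := by
      rw [← ((hq b).units_zpow_left l).eq, zpow_add, Units.val_mul]; noncomm_ring

theorem inv_right (hq : ∀ x, Commute (q : R) x) (hbc : b * c = 1) (hcb : c * b = 1)
    (h : QCommute q k a b) : QCommute q (-k) a c := by
  have hcab : c * a = (q ^ k : Rˣ) * (a * c) := by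
    calc c * a = c * (a * b) * c := by rw [mul_assoc, mul_assoc, hbc, mul_one]
      _ = (c * (q ^ k : Rˣ)) * (b * a) * c := by rw [h]; noncomm_ring
      _ = (q ^ k : Rˣ) * ((c * b) * a * c) := by
        rw [← ((hq c).units_zpow_left k).eq]; noncomm_ring
      _ = (q ^ k : Rˣ) * (a * c) := by rw [hcb, one_mul]
  exact QCommute.symm hcab

end QCommute

end QCommute

section MSystem

variable {R : Type*} [Ring R]

/-- The quantum M-system of rank `r`, with `Mi α n` a two-sided inverse of `M α n`. -/
structure IsQuantumMSystem (q : Rˣ) (r : ℕ) (M Mi : ℕ → ℤ → R) : Prop where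
  central : ∀ x : R, (q : R) * x = x * (q : R)
  bottom : ∀ n : ℤ, M 0 n = 1
  top : ∀ n : ℤ, M (r + 2) n = 0
  mul_inv : ∀ (α : ℕ) (n : ℤ), α ≤ r + 1 → M α n * Mi α n = 1
  inv_mul : ∀ (α : ℕ) (n : ℤ), α ≤ r + 1 → Mi α n * M α n = 1
  recurrence : ∀ (α : ℕ) (n : ℤ), 1 ≤ α → α ≤ r + 1 →
    (q : R) ^ α * M α (n + 1) * M α (n - 1) = M α n ^ 2 - M (α + 1) n * M (α - 1) n
  commutation : ∀ (α β ε : ℕ) (n : ℤ), ε ≤ 1 → α ≤ r + 1 → β ≤ r + 1 →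
    M α n * M β (n + (ε : ℤ)) = (q : R) ^ (ε * min α β) * M β (n + (ε : ℤ)) * M α n

/-- The coefficient `v` of the time evolution
`B_{α+1,n+1} = B_{α+1,n} - X v_{α,n} B_{α,n}` of the Miura series `B` of an M-system. -/
def timeShiftCoeff (M Mi : ℕ → ℤ → R) (α : ℕ) (n : ℤ) : R :=
  -(M (α + 2) (n + 1) * (Mi (α + 1) (n + 1) * Mi (α + 1) n * M α n))

namespace IsQuantumMSystem

variable {q : Rˣ} {r : ℕ} {M Mi : ℕ → ℤ → R} {α β : ℕ}

theorem commute_q (h : IsQuantumMSystem q r M Mi) (x : R) : Commute (q : R) x :=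
  h.central x

theorem Mi_zero (h : IsQuantumMSystem q r M Mi) (n : ℤ) : Mi 0 n = 1 := by
  simpa [h.bottom] using h.mul_inv 0 n (Nat.zero_le _)

theorem isUnit_M (h : IsQuantumMSystem q r M Mi) (hα : α ≤ r + 1) (n : ℤ) : IsUnit (M α n) :=
  ⟨⟨M α n, Mi α n, h.mul_inv α n hα, h.inv_mul α n hα⟩, rfl⟩

theorem recurrence_succ (h : IsQuantumMSystem q r M Mi) (hα : α ≤ r) (n : ℤ) :
    (q : R) ^ (α + 1) * (M (α + 1) (n + 1 + 1) * M (α + 1) n) =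
      M (α + 1) (n + 1) * M (α + 1) (n + 1) - M (α + 2) (n + 1) * M α (n + 1) := by
  simpa [sq, mul_assoc] using h.recurrence (α + 1) (n + 1) (by omega) (by omega)

theorem qCommute_M (h : IsQuantumMSystem q r M Mi) (hα : α ≤ r + 1) (hβ : β ≤ r + 1) (n : ℤ) :
    QCommute q 0 (M α n) (M β n) := by
  simpa [QCommute] using h.commutation α β 0 n zero_le_one hα hβ

theorem qCommute_M_succ (h : IsQuantumMSystem q r M Mi) (hβ : β ≤ r + 1) (hαβ : α ≤ β) (n : ℤ) :
    QCommute q α (M α n) (M β (n + 1)) := by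
  simpa [QCommute, hαβ, mul_assoc] using h.commutation α β 1 n le_rfl (hαβ.trans hβ) hβ

theorem qCommute_M_succ' (h : IsQuantumMSystem q r M Mi) (hβ : β ≤ r + 1) (hαβ : α ≤ β) (n : ℤ) :
    QCommute q (-α) (M α (n + 1)) (M β n) := by
  have := h.commutation β α 1 n le_rfl hβ (hαβ.trans hβ)
  exact QCommute.symm (by simpa [QCommute, hαβ, mul_assoc] using this)

theorem qCommute_Mi (h : IsQuantumMSystem q r M Mi) (hα : α ≤ r + 1) {k n : ℤ} {a : R}
    (ha : QCommute q k a (M α n)) : QCommute q (-k) a (Mi α n) :=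
  ha.inv_right h.commute_q (h.mul_inv α n hα) (h.inv_mul α n hα)

theorem M_mul_M_succ (h : IsQuantumMSystem q r M Mi) (hβ : β ≤ r + 1) (hαβ : α ≤ β) (n : ℤ) :
    M β n * M α (n + 1) = (q : R) ^ α * (M α (n + 1) * M β n) := by
  simpa [hαβ, mul_assoc] using h.commutation β α 1 n le_rfl hβ (hαβ.trans hβ)

theorem xivInv_succ_sub (h : IsQuantumMSystem q r M Mi) (hα : α ≤ r) (n : ℤ) :
    xivInv M Mi (α + 1) (n + 1) - xivInv M Mi (α + 1) n =
      -(M (α + 2) (n + 1) * M α (n + 1) * (Mi (α + 1) (n + 1) * Mi (α + 1) n)) := by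
  have hα' : α + 1 ≤ r + 1 := by omega
  refine ((h.isUnit_M hα' n).mul (h.isUnit_M hα' (n + 1))).mul_right_cancel ?_
  trans -(M (α + 2) (n + 1) * M α (n + 1))
  · calc (M (α + 1) (n + 1 + 1) * Mi (α + 1) (n + 1) - M (α + 1) (n + 1) * Mi (α + 1) n) *
          (M (α + 1) n * M (α + 1) (n + 1))
        = M (α + 1) (n + 1 + 1) * Mi (α + 1) (n + 1) * (M (α + 1) n * M (α + 1) (n + 1)) -
            M (α + 1) (n + 1) * (Mi (α + 1) n * M (α + 1) n) * M (α + 1) (n + 1) := by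
          noncomm_ring
      _ = (q : R) ^ (α + 1) * (M (α + 1) (n + 1 + 1) *
            (Mi (α + 1) (n + 1) * M (α + 1) (n + 1)) * M (α + 1) n) -
            M (α + 1) (n + 1) * M (α + 1) (n + 1) := by
          rw [h.M_mul_M_succ hα' le_rfl, h.inv_mul _ _ hα', mul_one, ← mul_assoc _ (_ ^ _),
            ← ((h.commute_q _).pow_left _).eq]
          simp only [mul_assoc]
      _ = -(M (α + 2) (n + 1) * M α (n + 1)) := by
          rw [h.inv_mul _ _ hα', mul_one, h.recurrence_succ hα, sub_sub_cancel_left]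
  · calc -(M (α + 2) (n + 1) * M α (n + 1))
        = -(M (α + 2) (n + 1) * M α (n + 1) * (Mi (α + 1) (n + 1) *
            (Mi (α + 1) n * M (α + 1) n) * M (α + 1) (n + 1))) := by
          rw [h.inv_mul _ _ hα', mul_one, h.inv_mul _ _ hα', mul_one]
      _ = _ := by noncomm_ring

theorem commute_M_timeShiftCoeff_factor (h : IsQuantumMSystem q r M Mi) (hα : α ≤ r) (n : ℤ) :
    Commute (M α (n + 1)) (Mi (α + 1) (n + 1) * Mi (α + 1) n * M α n) := by
  have hα' : α + 1 ≤ r + 1 := by omega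
  have weight_Mi_succ := h.qCommute_Mi hα' (h.qCommute_M (α := α) (by omega) hα' (n + 1))
  have weight_Mi := h.qCommute_Mi hα' (h.qCommute_M_succ' hα' (Nat.le_succ α) n)
  have weight_M := h.qCommute_M_succ' (hα.trans r.le_succ) (le_refl α) n
  refine QCommute.commute (q := q) ?_
  convert (weight_Mi_succ.mul_right h.commute_q weight_Mi).mul_right h.commute_q weight_M using 1
  ring

theorem xivInv_succ_sub_mul_xiv (h : IsQuantumMSystem q r M Mi) (hα : α ≤ r) (n : ℤ) :
    (xivInv M Mi (α + 1) (n + 1) - xivInv M Mi (α + 1) n) * xiv M Mi α n =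
      timeShiftCoeff M Mi α n := by
  calc (xivInv M Mi (α + 1) (n + 1) - xivInv M Mi (α + 1) n) * xiv M Mi α n
      = -(M (α + 2) (n + 1) * (M α (n + 1) * (Mi (α + 1) (n + 1) * Mi (α + 1) n * M α n)) *
          Mi α (n + 1)) := by
        rw [h.xivInv_succ_sub hα, xiv]; noncomm_ring
    _ = -(M (α + 2) (n + 1) * (Mi (α + 1) (n + 1) * Mi (α + 1) n * M α n) *
          (M α (n + 1) * Mi α (n + 1))) := by
        rw [(h.commute_M_timeShiftCoeff_factor hα n).eq]; noncomm_ring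
    _ = timeShiftCoeff M Mi α n := by rw [h.mul_inv _ _ (by omega), mul_one, timeShiftCoeff]

theorem xiv_sub_succ (h : IsQuantumMSystem q r M Mi) (hα : α < r) (n : ℤ) :
    xiv M Mi (α + 1) n - xiv M Mi (α + 1) (n + 1) =
      -(M (α + 2) (n + 1) * (Mi (α + 1) (n + 1 + 1) * Mi (α + 1) (n + 1) * M α (n + 1))) := by
  have hα' : α + 1 ≤ r + 1 := by omega
  have M_comm : M α (n + 1) * Mi (α + 1) (n + 1) = Mi (α + 1) (n + 1) * M α (n + 1) := by
    have := h.qCommute_Mi hα' (h.qCommute_M (α := α) (by omega) hα' (n + 1))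
    exact QCommute.commute (q := q) (by simpa using this)
  refine ((q.isUnit.pow (α + 1)).mul (h.isUnit_M hα' (n + 1 + 1))).mul_left_cancel ?_
  calc (q : R) ^ (α + 1) * M (α + 1) (n + 1 + 1) *
        (M (α + 1) n * Mi (α + 1) (n + 1) - M (α + 1) (n + 1) * Mi (α + 1) (n + 1 + 1))
      = (q : R) ^ (α + 1) * (M (α + 1) (n + 1 + 1) * M (α + 1) n) * Mi (α + 1) (n + 1) -
          (q : R) ^ (α + 1) * (M (α + 1) (n + 1 + 1) * M (α + 1) (n + 1)) *
            Mi (α + 1) (n + 1 + 1) := by noncomm_ring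
    _ = M (α + 1) (n + 1) * (M (α + 1) (n + 1) * Mi (α + 1) (n + 1)) -
          M (α + 2) (n + 1) * (M α (n + 1) * Mi (α + 1) (n + 1)) -
          M (α + 1) (n + 1) * (M (α + 1) (n + 1 + 1) * Mi (α + 1) (n + 1 + 1)) := by
        rw [h.recurrence_succ hα.le, ← h.M_mul_M_succ hα' le_rfl]; noncomm_ring
    _ = -(M (α + 2) (n + 1) * (M (α + 1) (n + 1 + 1) * Mi (α + 1) (n + 1 + 1)) *
          Mi (α + 1) (n + 1) * M α (n + 1)) := by
        rw [h.mul_inv _ _ hα', h.mul_inv _ _ hα', M_comm]; noncomm_ring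
    _ = -(M (α + 2) (n + 1) * M (α + 1) (n + 1 + 1) *
          (Mi (α + 1) (n + 1 + 1) * Mi (α + 1) (n + 1) * M α (n + 1))) := by noncomm_ring
    _ = _ := by
        rw [h.M_mul_M_succ (by omega) (Nat.le_succ (α + 1))]; noncomm_ring

theorem xivInv_mul_xiv_sub_succ (h : IsQuantumMSystem q r M Mi) (hα : α < r) (n : ℤ) :
    xivInv M Mi (α + 2) (n + 1) * (xiv M Mi (α + 1) n - xiv M Mi (α + 1) (n + 1)) =
      timeShiftCoeff M Mi α (n + 1) := by
  calc xivInv M Mi (α + 2) (n + 1) * (xiv M Mi (α + 1) n - xiv M Mi (α + 1) (n + 1))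
      = -(M (α + 2) (n + 1 + 1) * (Mi (α + 2) (n + 1) * M (α + 2) (n + 1)) *
          (Mi (α + 1) (n + 1 + 1) * Mi (α + 1) (n + 1) * M α (n + 1))) := by
        rw [h.xiv_sub_succ hα, xivInv]; noncomm_ring
    _ = timeShiftCoeff M Mi α (n + 1) := by rw [h.inv_mul _ _ (by omega), mul_one, timeShiftCoeff]

theorem xiv_mul_xivInv (h : IsQuantumMSystem q r M Mi) (hα : α ≤ r + 1) (n : ℤ) :
    xiv M Mi α n * xivInv M Mi α n = 1 := by
  calc xiv M Mi α n * xivInv M Mi α n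
      = M α n * (Mi α (n + 1) * M α (n + 1)) * Mi α n := by rw [xiv, xivInv]; noncomm_ring
    _ = 1 := by rw [h.inv_mul _ _ hα, mul_one, h.mul_inv _ _ hα]

theorem xv_one (h : IsQuantumMSystem q r M Mi) (n : ℤ) : xv M Mi 1 n = M 1 (n + 1) * Mi 1 n := by
  simp [xv, xiv, xivInv, h.bottom, h.Mi_zero]

theorem timeShiftCoeff_zero (h : IsQuantumMSystem q r M Mi) (n : ℤ) :
    timeShiftCoeff M Mi 0 n = xv M Mi 1 (n + 1) - xv M Mi 1 n := by
  simpa [xv, xiv, h.bottom, h.Mi_zero] using (h.xivInv_succ_sub_mul_xiv (Nat.zero_le r) n).symm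

theorem timeShiftCoeff_succ (h : IsQuantumMSystem q r M Mi) (hα : α < r) (n : ℤ) :
    timeShiftCoeff M Mi (α + 1) n =
      timeShiftCoeff M Mi α (n + 1) + xv M Mi (α + 2) (n + 1) - xv M Mi (α + 2) n := by
  rw [← h.xivInv_succ_sub_mul_xiv hα, ← h.xivInv_mul_xiv_sub_succ hα]
  simp only [xv, Nat.add_one_sub_one]
  noncomm_ring

theorem xv_mul_timeShiftCoeff (h : IsQuantumMSystem q r M Mi) (hα : α < r) (n : ℤ) :
    xv M Mi (α + 2) (n + 1) * timeShiftCoeff M Mi α n =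
      timeShiftCoeff M Mi α (n + 1) * xv M Mi (α + 1) n := by
  have telescope : xiv M Mi (α + 1) (n + 1) *
      (xivInv M Mi (α + 1) (n + 1) - xivInv M Mi (α + 1) n) =
      (xiv M Mi (α + 1) n - xiv M Mi (α + 1) (n + 1)) * xivInv M Mi (α + 1) n := by
    rw [mul_sub, sub_mul, h.xiv_mul_xivInv (by omega), h.xiv_mul_xivInv (by omega)]
  rw [← h.xivInv_succ_sub_mul_xiv hα.le, ← h.xivInv_mul_xiv_sub_succ hα]
  simp only [xv, Nat.add_one_sub_one]
  calc _ = xivInv M Mi (α + 2) (n + 1) * (xiv M Mi (α + 1) (n + 1) *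
        (xivInv M Mi (α + 1) (n + 1) - xivInv M Mi (α + 1) n)) * xiv M Mi α n := by noncomm_ring
    _ = _ := by rw [telescope]; noncomm_ring

theorem timeShiftCoeff_top (h : IsQuantumMSystem q r M Mi) (n : ℤ) :
    timeShiftCoeff M Mi r n = 0 := by
  rw [timeShiftCoeff, h.top, zero_mul, neg_zero]

theorem miuraSeries_xv_add_one (h : IsQuantumMSystem q r M Mi) (hα : α ≤ r) (n : ℤ) :
    miuraSeries (xv M Mi) (α + 1) (n + 1) = miuraSeries (xv M Mi) (α + 1) n -
      X * (C (timeShiftCoeff M Mi α n) * miuraSeries (xv M Mi) α n) :=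
  miuraSeries_succ_add_one h.timeShiftCoeff_zero (fun _ => h.timeShiftCoeff_succ)
    (fun _ => h.xv_mul_timeShiftCoeff) hα n

theorem miuraSeries_xv_eq (h : IsQuantumMSystem q r M Mi) (n : ℤ) :
    miuraSeries (xv M Mi) (r + 1) n = miuraSeries (xv M Mi) (r + 1) 0 := by
  have periodic : Function.Periodic (miuraSeries (xv M Mi) (r + 1)) 1 := fun n => by
    rw [h.miuraSeries_xv_add_one le_rfl, h.timeShiftCoeff_top, map_zero, zero_mul, mul_zero,
      sub_zero]
  simpa using periodic.int_mul_eq n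

theorem qCommute_timeShiftCoeff_zero (h : IsQuantumMSystem q r M Mi) (hr : 0 < r) {k l n : ℤ}
    {a : R} (ha : ∀ β, 1 ≤ β → β ≤ r + 1 → QCommute q k a (M β n))
    (ha_succ : ∀ β, 1 ≤ β → β ≤ r + 1 → QCommute q l a (M β (n + 1))) :
    QCommute q (-k) a (timeShiftCoeff M Mi 0 n) := by
  have weight_Mi := h.qCommute_Mi (by omega) (ha 1 le_rfl (by omega))
  have weight_Mi_succ := h.qCommute_Mi (by omega) (ha_succ 1 le_rfl (by omega))
  rw [timeShiftCoeff, h.bottom, mul_one]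
  convert ((ha_succ 2 (by omega) (by omega)).mul_right h.commute_q
    (weight_Mi_succ.mul_right h.commute_q weight_Mi)).neg_right using 1
  ring

theorem timeShiftCoeff_succ_commute (h : IsQuantumMSystem q r M Mi) (hα : α + 1 < r) {k l n : ℤ}
    {a : R} (ha : ∀ β, 1 ≤ β → β ≤ r + 1 → QCommute q k a (M β n))
    (ha_succ : ∀ β, 1 ≤ β → β ≤ r + 1 → QCommute q l a (M β (n + 1))) :
    Commute (timeShiftCoeff M Mi (α + 1) n) a := by
  have weight_Mi := h.qCommute_Mi (by omega) (ha (α + 2) (by omega) (by omega))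
  have weight_Mi_succ := h.qCommute_Mi (by omega) (ha_succ (α + 2) (by omega) (by omega))
  refine (QCommute.commute (q := q) ?_).symm
  rw [timeShiftCoeff]
  convert ((ha_succ (α + 3) (by omega) (by omega)).mul_right h.commute_q
    ((weight_Mi_succ.mul_right h.commute_q weight_Mi).mul_right h.commute_q
      (ha (α + 1) (by omega) (by omega)))).neg_right using 1
  ring

theorem xv_commute (h : IsQuantumMSystem q r M Mi) (hα : α < r) {k l n : ℤ} {a : R}
    (ha : ∀ β, 1 ≤ β → β ≤ r + 1 → QCommute q k a (M β n))
    (ha_succ : ∀ β, 1 ≤ β → β ≤ r + 1 → QCommute q l a (M β (n + 1))) :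
    Commute (xv M Mi (α + 2) n) a := by
  have weight_xivInv := (ha_succ (α + 2) (by omega) (by omega)).mul_right h.commute_q
    (h.qCommute_Mi (by omega) (ha (α + 2) (by omega) (by omega)))
  have weight_xiv := (ha (α + 1) (by omega) (by omega)).mul_right h.commute_q
    (h.qCommute_Mi (by omega) (ha_succ (α + 1) (by omega) (by omega)))
  refine (QCommute.commute (q := q) ?_).symm
  rw [xv, xivInv, xiv, Nat.add_one_sub_one]
  convert weight_xivInv.mul_right h.commute_q weight_xiv using 1
  ring

theorem miuraSeries_xv_one_semiconjBy (h : IsQuantumMSystem q r M Mi) (n : ℤ) :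
    SemiconjBy (miuraSeries (xv M Mi) 1 n) (C (M 1 n) - X * C (q * M 1 (n + 1)))
      (C (M 1 n) - X * C (M 1 (n + 1))) := by
  rw [miuraSeries_succ, miuraSeries, miuraSeries, mul_one, h.xv_one]
  refine one_sub_X_mul_C_semiconjBy ?_ ?_
  · rw [mul_assoc, h.inv_mul _ _ (by omega), mul_one]
  · rw [← mul_assoc, h.M_mul_M_succ (by omega) le_rfl, pow_one, mul_assoc, mul_assoc,
      h.mul_inv _ _ (by omega), mul_one]

theorem miuraSeries_xv_semiconjBy (h : IsQuantumMSystem q r M Mi) (n : ℤ) :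
    SemiconjBy (miuraSeries (xv M Mi) (r + 1) n) (C (M 1 n) - X * C (q * M 1 (n + 1)))
      (C (M 1 n) - X * C (M 1 (n + 1))) := by
  have weight (β : ℕ) (_ : 1 ≤ β) (hβ : β ≤ r + 1) : QCommute q 0 (M 1 n) (M β n) :=
    h.qCommute_M (by omega) hβ n
  have weight_succ (β : ℕ) (hβ : 1 ≤ β) (hβ' : β ≤ r + 1) :
      QCommute q 1 (M 1 n) (M β (n + 1)) := h.qCommute_M_succ hβ' hβ n
  have succ_weight (β : ℕ) (hβ : 1 ≤ β) (hβ' : β ≤ r + 1) :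
      QCommute q (-1) (M 1 (n + 1)) (M β n) := h.qCommute_M_succ' hβ' hβ n
  have succ_weight_succ (β : ℕ) (_ : 1 ≤ β) (hβ : β ≤ r + 1) :
      QCommute q 0 (M 1 (n + 1)) (M β (n + 1)) := h.qCommute_M (by omega) hβ (n + 1)
  refine miuraSeries_semiconjBy (v := timeShiftCoeff M Mi)
    (fun α hα => h.miuraSeries_xv_add_one hα.le n) (h.miuraSeries_xv_one_semiconjBy n)
    (fun hr => C_semiconjBy_sub_X_mul ?_ ?_)
    (fun α hα => C_semiconjBy_sub_X_mul (h.timeShiftCoeff_succ_commute hα weight weight_succ)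
      (h.timeShiftCoeff_succ_commute hα succ_weight succ_weight_succ))
    (fun α hα => C_semiconjBy_sub_X_mul (h.xv_commute hα weight weight_succ)
      (h.xv_commute hα succ_weight succ_weight_succ)) le_rfl
  · have := h.qCommute_timeShiftCoeff_zero hr weight weight_succ
    exact (QCommute.commute (q := q) (by simpa using this)).symm
  · have := h.qCommute_timeShiftCoeff_zero hr succ_weight succ_weight_succ
    rw [SemiconjBy, this, neg_neg, zpow_one, ← mul_assoc, ← mul_assoc, h.central]

end IsQuantumMSystem

end MSystem

theorem quantum_Q_power_sum_Hamiltonians_general {R : Type*} [Ring R] {q : Rˣ} {r : ℕ}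
    {M Mi : ℕ → ℤ → R} (h : IsQuantumMSystem q r M Mi) (k : ℕ) (n : ℤ) :
    newtonP (fun j => if j ≤ r + 1 then CMiura M Mi r j 0 else 0) k * M 1 n
      - M 1 n * newtonP (fun j => if j ≤ r + 1 then CMiura M Mi r j 0 else 0) k
      = (1 - (q : R) ^ k) * M 1 (n + (k : ℤ)) := by
  have extend_by_zero : (fun j => if j ≤ r + 1 then CMiura M Mi r j 0 else 0) =
      fun j => CMiura M Mi r j 0 :=
    funext fun j => ite_eq_left_iff.mpr fun hj => (CMiura_of_lt M Mi (not_le.mp hj) 0).symm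
  rw [extend_by_zero]
  let F := miuraSeries (xv M Mi) (r + 1) 0
  have F_eq : F = mk fun m => (-1) ^ m * CMiura M Mi r m 0 := by
    ext m
    rw [coeff_miuraSeries_xv, coeff_mk]
  have F_isUnit : IsUnit F := by
    rw [isUnit_iff_constantCoeff, constantCoeff_miuraSeries]
    exact isUnit_one
  have newton : F * mk (newtonP fun j => CMiura M Mi r j 0) = -eulerDeriv F := by
    rw [F_eq]
    exact mk_mul_mk_newtonP _ (CMiura_zero M Mi r 0)
  have exchange (n : ℤ) : SemiconjBy F (C (M 1 n) - X * C (q * M 1 (n + 1)))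
      (C (M 1 n) - X * C (M 1 (n + 1))) := by
    simpa only [h.miuraSeries_xv_eq n] using h.miuraSeries_xv_semiconjBy n
  simpa [Ring.lie_def] using lie_coeff_of_semiconjBy h.commute_q F_isUnit newton exchange k n

theorem quantum_Q_power_sum_Hamiltonians
    {R : Type*} [Ring R] (q A Δ : Rˣ)
    (hq : ∀ x : R, (q : R) * x = x * (q : R))
    (r : ℕ) (hr : 1 ≤ r)
    (M Mi : ℕ → ℤ → R)
    (hM0 : ∀ n : ℤ, M 0 n = 1)
    (hMtop : ∀ n : ℤ, M (r + 2) n = 0)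
    (hMiL : ∀ (α : ℕ) (n : ℤ), α ≤ r + 1 → M α n * Mi α n = 1)
    (hMiR : ∀ (α : ℕ) (n : ℤ), α ≤ r + 1 → Mi α n * M α n = 1)
    (hMsys : ∀ (α : ℕ) (n : ℤ), 1 ≤ α → α ≤ r + 1 →
      (q : R) ^ α * M α (n + 1) * M α (n - 1) = M α n ^ 2 - M (α + 1) n * M (α - 1) n)
    (hcom : ∀ (α β ε : ℕ) (n : ℤ), ε ≤ 1 → α ≤ r + 1 → β ≤ r + 1 →
      M α n * M β (n + (ε : ℤ)) = (q : R) ^ (ε * min α β) * M β (n + (ε : ℤ)) * M α n)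
    (hAΔ : ∀ n : ℤ, M (r + 1) n = ((A ^ n : Rˣ) : R) * (Δ : R))
    (hΔM : ∀ (α : ℕ) (n : ℤ), 1 ≤ α → α ≤ r + 1 →
      (Δ : R) * M α n = ((q ^ ((α : ℤ) * n) : Rˣ) : R) * M α n * (Δ : R))
    (hAM : ∀ (α : ℕ) (n : ℤ), 1 ≤ α → α ≤ r + 1 →
      (A : R) * M α n = ((q ^ (-(α : ℤ)) : Rˣ) : R) * M α n * (A : R))
    (hΔA : (Δ : R) * (A : R) = (q : R) ^ (r + 1) * (A : R) * (Δ : R))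
    (hext : ∀ (α β : ℕ) (n p : ℤ), α ≤ r + 1 → β ≤ r + 1 →
      |p| ≤ |(β : ℤ) - (α : ℤ)| + 1 →
      M α n * M β (n + p) = ((q ^ (p * ((min α β : ℕ) : ℤ)) : Rˣ) : R) * M β (n + p) * M α n) :
    ∀ (k : ℕ) (n : ℤ), 1 ≤ k →
      newtonP (fun j => if j ≤ r + 1 then CMiura M Mi r j 0 else 0) k * M 1 n
        - M 1 n * newtonP (fun j => if j ≤ r + 1 then CMiura M Mi r j 0 else 0) k
        = (1 - (q : R) ^ k) * M 1 (n + (k : ℤ)) :=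
  fun k n _ =>
    quantum_Q_power_sum_Hamiltonians_general ⟨hq, hM0, hMtop, hMiL, hMiR, hMsys, hcom⟩ k n
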